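/- If 1/2 ≤ c < 1, then N_c^{(1)}(x) ≤ 2·N_{c²}^{(2)}(x) for every finitely supported x : ℕ → ℝ. -/

import Mathlib

/-!
The comparison is proved level by level: `N1Aux c k x ≤ 2 * N2Aux (c ^ 2) k x`.

In a competitor `(1/2) ∑_{i ≠ i₀} N1(E i x) + c N1(E i₀ x)` for `N1`, expand the distinguished term
once more. If `N1(E i₀ x)` is attained by a family `G` then, as `1/2 ≤ c`,
`c N1(E i₀ x) ≤ c ((1/2) ∑_{j ≠ j₀} N1(G j x) + c N1(G j₀ x)) ≤ c² ∑ j, N1(G j x)`,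
and the sets `G j`, cut down to `E i₀`, are a competitor in the inner supremum of `N2`. By
induction the total is at most twice a competitor for `N2`. If `N1(E i₀ x)` is the sup norm then
`c ‖E i₀ x‖_∞ ≤ 2 c² ‖E i₀ x‖_∞`, again because `1/2 ≤ c`, and the single set `E i₀` serves as
the inner family; this is the only place where the factor `2` is needed.

That the suprema are over bounded sets follows from the bound of every iterate by the `ℓ¹` norm,
which holds since the sets `E i` (`i ≠ i₀`) and `F j` are pairwise disjoint.
-/

noncomputable section

/-- sup norm of a finitely supported sequence -/
def supNorm (x : ℕ →₀ ℝ) : ℝ := ⨆ i, |x i|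

/-- coordinate restriction of `x` to the finite set `E` -/
def restr (E : Finset ℕ) (x : ℕ →₀ ℝ) : ℕ →₀ ℝ := x.filter (· ∈ E)

/-- an admissible family of `m` successive finite sets whose elements are `≥ n`. -/
def AdmissibleOn (n m : ℕ) (E : Fin m → Finset ℕ) : Prop :=
  (∀ i j : Fin m, i < j → ∀ a ∈ E i, ∀ b ∈ E j, a < b) ∧
  (∀ i : Fin m, ∀ a ∈ E i, n ≤ a)

/-- `n ≤ E 0 < ⋯ < E (n-1)` -/
def Admissible (n : ℕ) (E : Fin n → Finset ℕ) : Prop := AdmissibleOn n n E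

/-- the family `F` lies strictly between `E (i₀ - 1)` and `E (i₀ + 1)`. -/
def Between {n : ℕ} (E : Fin n → Finset ℕ) (i₀ : Fin n) {m : ℕ}
    (F : Fin m → Finset ℕ) : Prop :=
  ∀ j : Fin m, ∀ b ∈ F j,
    (∀ i : Fin n, i < i₀ → ∀ a ∈ E i, a < b) ∧
    (∀ i : Fin n, i₀ < i → ∀ a ∈ E i, b < a)

/-- the iteration defining `N_c^{(1)}`. -/
def N1Aux (c : ℝ) : ℕ → (ℕ →₀ ℝ) → ℝ
  | 0, x => supNorm x
  | k + 1, x => max (supNorm x)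
      (sSup {r : ℝ | ∃ (n : ℕ) (E : Fin n → Finset ℕ) (i₀ : Fin n), Admissible n E ∧
        r = (1 / 2) * (∑ i ∈ Finset.univ.erase i₀, N1Aux c k (restr (E i) x)) +
            c * N1Aux c k (restr (E i₀) x)})

/-- `N_c^{(1)}`, the increasing limit of its iteration. -/
def N1 (c : ℝ) (x : ℕ →₀ ℝ) : ℝ := ⨆ k, N1Aux c k x

/-- the iteration defining `N_c^{(2)}`. -/
def N2Aux (c : ℝ) : ℕ → (ℕ →₀ ℝ) → ℝ
  | 0, x => supNorm x
  | k + 1, x => max (supNorm x)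
      (sSup {r : ℝ | ∃ (n : ℕ) (E : Fin n → Finset ℕ) (i₀ : Fin n), Admissible n E ∧
        r = (1 / 2) * (∑ i ∈ Finset.univ.erase i₀, N2Aux c k (restr (E i) x)) +
            c * sSup {t : ℝ | ∃ (m : ℕ) (F : Fin m → Finset ℕ),
                  Admissible m F ∧ Between E i₀ F ∧
                  t = ∑ j, N2Aux c k (restr (F j) x)}})

/-- `N_c^{(2)}`, the increasing limit of its iteration. -/
def N2 (c : ℝ) (x : ℕ →₀ ℝ) : ℝ := ⨆ k, N2Aux c k x

/-- The `ℓ¹` norm of a finitely supported sequence. -/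
def l1Norm (x : ℕ →₀ ℝ) : ℝ := x.sum fun _ r => |r|

lemma supNorm_nonneg (x : ℕ →₀ ℝ) : 0 ≤ supNorm x := Real.iSup_nonneg fun _ => abs_nonneg _

lemma l1Norm_nonneg (x : ℕ →₀ ℝ) : 0 ≤ l1Norm x :=
  Finset.sum_nonneg fun _ _ => abs_nonneg _

lemma supNorm_le_l1Norm (x : ℕ →₀ ℝ) : supNorm x ≤ l1Norm x := by
  refine Real.iSup_le (fun i => ?_) (l1Norm_nonneg x)
  by_cases hi : i ∈ x.support
  · exact Finset.single_le_sum (f := fun i => |x i|) (fun _ _ => abs_nonneg _) hi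
  · rw [Finsupp.notMem_support_iff.1 hi, abs_zero]
    exact l1Norm_nonneg x

lemma l1Norm_restr (E : Finset ℕ) (x : ℕ →₀ ℝ) : l1Norm (restr E x) = ∑ a ∈ E, |x a| := by
  unfold l1Norm
  rw [Finsupp.sum_of_support_subset (s := E) _ _ _ (by simp)]
  · refine Finset.sum_congr rfl fun a ha => ?_
    simp [restr, ha]
  · intro a ha
    have := Finsupp.mem_support_iff.1 ha
    by_contra h
    exact this (by simp [restr, h])

/-- Superadditivity of the `ℓ¹` norm over pairwise disjoint restrictions. -/
lemma sum_l1Norm_restr_le {ι : Type*} (D : Finset ι) (G : ι → Finset ℕ)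
    (hG : (D : Set ι).PairwiseDisjoint G) (x : ℕ →₀ ℝ) :
    ∑ s ∈ D, l1Norm (restr (G s) x) ≤ l1Norm x := by
  simp only [l1Norm_restr]
  rw [← Finset.sum_biUnion hG, ← Finset.sum_filter_of_ne (p := (· ∈ x.support))]
  · refine Finset.sum_le_sum_of_subset_of_nonneg (fun a ha => (Finset.mem_filter.1 ha).2) ?_
    exact fun _ _ _ => abs_nonneg _
  · intro a _ h
    simpa using h

lemma restr_restr (E F : Finset ℕ) (x : ℕ →₀ ℝ) : restr F (restr E x) = restr (F ∩ E) x := by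
  ext a
  by_cases h1 : a ∈ E <;> by_cases h2 : a ∈ F <;> simp [restr, h1, h2]

lemma Admissible.disjoint {n : ℕ} {E : Fin n → Finset ℕ} (h : Admissible n E)
    {i j : Fin n} (hij : i ≠ j) : Disjoint (E i) (E j) := by
  rw [Finset.disjoint_left]
  intro a hi hj
  rcases lt_or_gt_of_ne hij with hlt | hlt
  · exact lt_irrefl _ (h.1 _ _ hlt _ hi _ hj)
  · exact lt_irrefl _ (h.1 _ _ hlt _ hj _ hi)

lemma Between.disjoint {n m : ℕ} {E : Fin n → Finset ℕ} {i₀ : Fin n} {F : Fin m → Finset ℕ}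
    (h : Between E i₀ F) {i : Fin n} (hi : i ≠ i₀) (j : Fin m) : Disjoint (E i) (F j) := by
  rw [Finset.disjoint_left]
  intro a ha hb
  rcases lt_or_gt_of_ne hi with hlt | hlt
  · exact lt_irrefl _ ((h j a hb).1 i hlt a ha)
  · exact lt_irrefl _ ((h j a hb).2 i hlt a ha)

/-- The `ℓ¹` mass carried by the non-distinguished sets and by the inner family together. -/
lemma sum_l1Norm_add_le {n m : ℕ} {E : Fin n → Finset ℕ} {i₀ : Fin n} {F : Fin m → Finset ℕ}
    (hE : Admissible n E) (hF : Admissible m F) (hB : Between E i₀ F) (x : ℕ →₀ ℝ) :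
    ∑ i ∈ Finset.univ.erase i₀, l1Norm (restr (E i) x) + ∑ j, l1Norm (restr (F j) x)
      ≤ l1Norm x := by
  have := sum_l1Norm_restr_le ((Finset.univ.erase i₀).disjSum Finset.univ) (Sum.elim E F) ?_ x
  · simpa [Finset.sum_disjSum] using this
  · rintro (i | i) hi (j | j) hj hij
    · exact hE.disjoint (fun h => hij (by rw [h]))
    · exact hB.disjoint (by simpa using hi) j
    · exact (hB.disjoint (by simpa using hj) i).symm
    · exact hF.disjoint (fun h => hij (by rw [h]))

/-- The set whose supremum is the distinguished term in the definition of `N2Aux`. -/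
def innerSet (c : ℝ) (k : ℕ) (x : ℕ →₀ ℝ) {n : ℕ} (E : Fin n → Finset ℕ) (i₀ : Fin n) : Set ℝ :=
  {t : ℝ | ∃ (m : ℕ) (F : Fin m → Finset ℕ), Admissible m F ∧ Between E i₀ F ∧
    t = ∑ j, N2Aux c k (restr (F j) x)}

/-- The set of competitors in the definition of `N2Aux c (k + 1) x`. -/
def outerSet (c : ℝ) (k : ℕ) (x : ℕ →₀ ℝ) : Set ℝ :=
  {r : ℝ | ∃ (n : ℕ) (E : Fin n → Finset ℕ) (i₀ : Fin n), Admissible n E ∧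
    r = (1 / 2) * (∑ i ∈ Finset.univ.erase i₀, N2Aux c k (restr (E i) x)) +
      c * sSup (innerSet c k x E i₀)}

lemma N2Aux_succ (c : ℝ) (k : ℕ) (x : ℕ →₀ ℝ) :
    N2Aux c (k + 1) x = max (supNorm x) (sSup (outerSet c k x)) := rfl

lemma supNorm_le_N2Aux (c : ℝ) (k : ℕ) (x : ℕ →₀ ℝ) : supNorm x ≤ N2Aux c k x := by
  cases k with
  | zero => exact le_rfl
  | succ k => exact le_max_left _ _

lemma N2Aux_nonneg (c : ℝ) (k : ℕ) (x : ℕ →₀ ℝ) : 0 ≤ N2Aux c k x :=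
  (supNorm_nonneg x).trans (supNorm_le_N2Aux c k x)

lemma inner_le {c : ℝ} {k : ℕ} (ih : ∀ y, N2Aux c k y ≤ l1Norm y) (x : ℕ →₀ ℝ) {n : ℕ}
    {E : Fin n → Finset ℕ} (hE : Admissible n E) (i₀ : Fin n) {t : ℝ}
    (ht : t ∈ innerSet c k x E i₀) :
    t ≤ l1Norm x - ∑ i ∈ Finset.univ.erase i₀, l1Norm (restr (E i) x) := by
  obtain ⟨m, F, hF, hB, rfl⟩ := ht
  have h1 := sum_l1Norm_add_le hE hF hB x
  have h2 : ∑ j, N2Aux c k (restr (F j) x) ≤ ∑ j, l1Norm (restr (F j) x) :=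
    Finset.sum_le_sum fun j _ => ih _
  linarith

lemma outer_le {c : ℝ} (h0 : 0 ≤ c) (h1 : c ≤ 1) {k : ℕ} (ih : ∀ y, N2Aux c k y ≤ l1Norm y)
    (x : ℕ →₀ ℝ) {r : ℝ} (hr : r ∈ outerSet c k x) : r ≤ l1Norm x := by
  obtain ⟨n, E, i₀, hE, rfl⟩ := hr
  have hS : ∑ i ∈ Finset.univ.erase i₀, l1Norm (restr (E i) x) ≤ l1Norm x :=
    sum_l1Norm_restr_le _ E (fun i _ j _ hij => hE.disjoint hij) x
  have hS0 : 0 ≤ ∑ i ∈ Finset.univ.erase i₀, l1Norm (restr (E i) x) :=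
    Finset.sum_nonneg fun i _ => l1Norm_nonneg _
  have hA : ∑ i ∈ Finset.univ.erase i₀, N2Aux c k (restr (E i) x)
      ≤ ∑ i ∈ Finset.univ.erase i₀, l1Norm (restr (E i) x) :=
    Finset.sum_le_sum fun i _ => ih _
  have hI : sSup (innerSet c k x E i₀)
      ≤ l1Norm x - ∑ i ∈ Finset.univ.erase i₀, l1Norm (restr (E i) x) :=
    Real.sSup_le (fun t ht => inner_le ih x hE i₀ ht) (by linarith)
  have := mul_le_mul_of_nonneg_left hI h0
  have := mul_le_of_le_one_left (sub_nonneg.2 hS) h1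
  linarith

lemma N2Aux_le_l1Norm {c : ℝ} (h0 : 0 ≤ c) (h1 : c ≤ 1) (k : ℕ) (x : ℕ →₀ ℝ) :
    N2Aux c k x ≤ l1Norm x := by
  induction k generalizing x with
  | zero => exact supNorm_le_l1Norm x
  | succ k ih =>
    rw [N2Aux_succ]
    exact max_le (supNorm_le_l1Norm x)
      (Real.sSup_le (fun r hr => outer_le h0 h1 ih x hr) (l1Norm_nonneg x))

/-- Every pair of families admissible for `N2` gives a lower bound for the next iterate. -/
lemma le_N2Aux_succ {c : ℝ} (h0 : 0 ≤ c) (h1 : c ≤ 1) (k : ℕ) (x : ℕ →₀ ℝ) {n m : ℕ}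
    {E : Fin n → Finset ℕ} {i₀ : Fin n} {F : Fin m → Finset ℕ}
    (hE : Admissible n E) (hF : Admissible m F) (hB : Between E i₀ F) :
    (1 / 2) * (∑ i ∈ Finset.univ.erase i₀, N2Aux c k (restr (E i) x)) +
      c * ∑ j, N2Aux c k (restr (F j) x) ≤ N2Aux c (k + 1) x := by
  have ih := N2Aux_le_l1Norm h0 h1 k
  have hI : ∑ j, N2Aux c k (restr (F j) x) ≤ sSup (innerSet c k x E i₀) :=
    le_csSup ⟨_, fun t ht => inner_le ih x hE i₀ ht⟩ ⟨m, F, hF, hB, rfl⟩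
  have hO : (1 / 2) * (∑ i ∈ Finset.univ.erase i₀, N2Aux c k (restr (E i) x)) +
      c * sSup (innerSet c k x E i₀) ≤ sSup (outerSet c k x) :=
    le_csSup ⟨_, fun r hr => outer_le h0 h1 ih x hr⟩ ⟨n, E, i₀, hE, rfl⟩
  have := mul_le_mul_of_nonneg_left hI h0
  rw [N2Aux_succ]
  exact le_max_of_le_right (by linarith)

lemma N2Aux_le_succ {c : ℝ} (h0 : 0 ≤ c) (h1 : c ≤ 1) (k : ℕ) (x : ℕ →₀ ℝ) :
    N2Aux c k x ≤ N2Aux c (k + 1) x := by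
  induction k generalizing x with
  | zero => exact supNorm_le_N2Aux c 1 x
  | succ k ih =>
    rw [N2Aux_succ c k x]
    refine max_le (supNorm_le_N2Aux _ _ _) (Real.sSup_le ?_ (N2Aux_nonneg _ _ _))
    rintro r ⟨n, E, i₀, hE, rfl⟩
    have hI : sSup (innerSet c k x E i₀) ≤ sSup (innerSet c (k + 1) x E i₀) := by
      have hbdd : BddAbove (innerSet c (k + 1) x E i₀) :=
        ⟨_, fun t ht => inner_le (N2Aux_le_l1Norm h0 h1 (k + 1)) x hE i₀ ht⟩
      refine Real.sSup_le ?_ (Real.sSup_nonneg ?_)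
      · rintro t ⟨m, F, hF, hB, rfl⟩
        exact (Finset.sum_le_sum fun j _ => ih _).trans (le_csSup hbdd ⟨m, F, hF, hB, rfl⟩)
      · rintro t ⟨m, F, hF, hB, rfl⟩
        exact Finset.sum_nonneg fun j _ => N2Aux_nonneg _ _ _
    have hA : ∑ i ∈ Finset.univ.erase i₀, N2Aux c k (restr (E i) x)
        ≤ ∑ i ∈ Finset.univ.erase i₀, N2Aux c (k + 1) (restr (E i) x) :=
      Finset.sum_le_sum fun i _ => ih _
    have hO : (1 / 2) * (∑ i ∈ Finset.univ.erase i₀, N2Aux c (k + 1) (restr (E i) x)) +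
        c * sSup (innerSet c (k + 1) x E i₀) ≤ sSup (outerSet c (k + 1) x) :=
      le_csSup ⟨_, fun r hr => outer_le h0 h1 (N2Aux_le_l1Norm h0 h1 (k + 1)) x hr⟩
        ⟨n, E, i₀, hE, rfl⟩
    have := mul_le_mul_of_nonneg_left hI h0
    rw [N2Aux_succ]
    exact le_max_of_le_right (by linarith)

/-- Sets obtained by cutting down to `E i₀` lie between the neighbours of `E i₀`. -/
lemma between_inter {n m : ℕ} {E : Fin n → Finset ℕ} (hE : Admissible n E) (i₀ : Fin n)
    (G : Fin m → Finset ℕ) : Between E i₀ fun j => G j ∩ E i₀ := by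
  intro j b hb
  have hb' := (Finset.mem_inter.1 hb).2
  exact ⟨fun i hi a ha => hE.1 i i₀ hi a ha b hb', fun i hi a ha => hE.1 i₀ i hi b hb' a ha⟩

lemma admissible_inter {m : ℕ} {G : Fin m → Finset ℕ} (hG : Admissible m G) (A : Finset ℕ) :
    Admissible m fun j => G j ∩ A :=
  ⟨fun i j hij a ha b hb =>
    hG.1 i j hij a (Finset.mem_inter.1 ha).1 b (Finset.mem_inter.1 hb).1,
   fun i a ha => hG.2 i a (Finset.mem_inter.1 ha).1⟩

/-- The case where the distinguished term of an `N1` competitor is the sup norm. -/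
lemma sup_term_le {c : ℝ} (hc0 : 1 / 2 ≤ c) (hc1 : c < 1) (k : ℕ) (x : ℕ →₀ ℝ) {n : ℕ}
    {E : Fin n → Finset ℕ} (hE : Admissible n E) (i₀ : Fin n) :
    ∑ i ∈ Finset.univ.erase i₀, N2Aux (c ^ 2) k (restr (E i) x) + c * supNorm (restr (E i₀) x)
      ≤ 2 * N2Aux (c ^ 2) (k + 1) x := by
  have hc2 : c ^ 2 ≤ 1 := by nlinarith
  -- A single set is an admissible inner family unless it contains `0`; it does not, since `n ≥ 1`.
  have hF : Admissible 1 fun _ => E i₀ := by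
    refine ⟨fun i j hij => absurd hij (by simp [Subsingleton.elim i j]), fun _ a ha => ?_⟩
    have := hE.2 i₀ a ha
    have := i₀.pos
    omega
  have hB : Between E i₀ (fun _ : Fin 1 => E i₀) := by
    simpa using between_inter hE i₀ (fun _ : Fin 1 => E i₀)
  have h := le_N2Aux_succ (sq_nonneg c) hc2 k x hE hF hB
  simp only [Finset.univ_unique, Finset.sum_singleton] at h
  have h1 := supNorm_le_N2Aux (c ^ 2) k (restr (E i₀) x)
  have h2 := mul_le_mul_of_nonneg_left h1 (sq_nonneg c)
  have h3 : c * supNorm (restr (E i₀) x) ≤ 2 * c ^ 2 * supNorm (restr (E i₀) x) :=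
    mul_le_mul_of_nonneg_right (by nlinarith) (supNorm_nonneg _)
  linarith

lemma N1Aux_le {c : ℝ} (hc0 : 1 / 2 ≤ c) (hc1 : c < 1) (k : ℕ) (x : ℕ →₀ ℝ) :
    N1Aux c k x ≤ 2 * N2Aux (c ^ 2) k x := by
  have hc2 : c ^ 2 ≤ 1 := by nlinarith
  have hcpos : 0 < c := by linarith
  induction k using Nat.strong_induction_on generalizing x with
  | _ k ih =>
  have hsup : supNorm x ≤ 2 * N2Aux (c ^ 2) k x := by
    have := supNorm_le_N2Aux (c ^ 2) k x
    have := supNorm_nonneg x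
    linarith
  rcases k with _ | k
  · exact hsup
  rw [N1Aux]
  refine max_le hsup (Real.sSup_le ?_ (by have := N2Aux_nonneg (c ^ 2) (k + 1) x; linarith))
  rintro r ⟨n, E, i₀, hE, rfl⟩
  have hA : ∑ i ∈ Finset.univ.erase i₀, N1Aux c k (restr (E i) x)
      ≤ 2 * ∑ i ∈ Finset.univ.erase i₀, N2Aux (c ^ 2) k (restr (E i) x) := by
    rw [Finset.mul_sum]
    exact Finset.sum_le_sum fun i _ => ih k (Nat.lt_succ_self k) _
  have hs := sup_term_le hc0 hc1 k x hE i₀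
  -- It remains to bound the distinguished term.
  suffices h : N1Aux c k (restr (E i₀) x) ≤ (2 * N2Aux (c ^ 2) (k + 1) x -
      ∑ i ∈ Finset.univ.erase i₀, N2Aux (c ^ 2) k (restr (E i) x)) / c by
    rw [le_div_iff₀ hcpos] at h
    linarith
  have hs' : supNorm (restr (E i₀) x) ≤ (2 * N2Aux (c ^ 2) (k + 1) x -
      ∑ i ∈ Finset.univ.erase i₀, N2Aux (c ^ 2) k (restr (E i) x)) / c := by
    rw [le_div_iff₀ hcpos]
    linarith
  rcases k with _ | k
  · exact hs'
  rw [N1Aux]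
  refine max_le hs' (Real.sSup_le ?_ ((supNorm_nonneg _).trans hs'))
  rintro s ⟨m, G, j₀, hG, rfl⟩
  rw [le_div_iff₀ hcpos]
  simp only [restr_restr]
  have h := le_N2Aux_succ (sq_nonneg c) hc2 (k + 1) x hE (admissible_inter hG (E i₀))
    (between_inter hE i₀ G)
  have hk : ∀ y, N1Aux c k y ≤ 2 * N2Aux (c ^ 2) (k + 1) y := fun y => by
    have := ih k (by omega) y
    have := N2Aux_le_succ (sq_nonneg c) hc2 k y
    linarith
  have h1 : ∑ j ∈ Finset.univ.erase j₀, N1Aux c k (restr (G j ∩ E i₀) x)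
      ≤ 2 * ∑ j ∈ Finset.univ.erase j₀, N2Aux (c ^ 2) (k + 1) (restr (G j ∩ E i₀) x) := by
    rw [Finset.mul_sum]
    exact Finset.sum_le_sum fun j _ => hk _
  have h2 := hk (restr (G j₀ ∩ E i₀) x)
  have h3 : 0 ≤ ∑ j ∈ Finset.univ.erase j₀, N2Aux (c ^ 2) (k + 1) (restr (G j ∩ E i₀) x) :=
    Finset.sum_nonneg fun j _ => N2Aux_nonneg _ _ _
  rw [← Finset.add_sum_erase _ _ (Finset.mem_univ j₀)] at h
  set S := ∑ j ∈ Finset.univ.erase j₀, N2Aux (c ^ 2) (k + 1) (restr (G j ∩ E i₀) x)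
  have h4 := mul_le_mul_of_nonneg_left h1 hcpos.le
  have h5 := mul_le_mul_of_nonneg_left h2 (sq_nonneg c)
  -- Raising the weight `1 / 2` to `c` on the non-distinguished sets uses `1 / 2 ≤ c`.
  have h6 : c * S ≤ 2 * c ^ 2 * S := mul_le_mul_of_nonneg_right (by nlinarith) h3
  linarith

/-- If `1/2 ≤ c < 1` then `N_c^{(1)}(x) ≤ 2 N_{c²}^{(2)}(x)` for every finitely
supported `x`. -/
theorem stmt15 (c : ℝ) (hc0 : 1 / 2 ≤ c) (hc1 : c < 1) :
    ∀ x : ℕ →₀ ℝ, N1 c x ≤ 2 * N2 (c ^ 2) x := by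
  intro x
  have hc2 : c ^ 2 ≤ 1 := by nlinarith
  refine ciSup_le fun k => (N1Aux_le hc0 hc1 k x).trans ?_
  have hb : BddAbove (Set.range fun k => N2Aux (c ^ 2) k x) := by
    refine ⟨l1Norm x, ?_⟩
    rintro _ ⟨k, rfl⟩
    exact N2Aux_le_l1Norm (sq_nonneg c) hc2 k x
  exact mul_le_mul_of_nonneg_left (le_ciSup hb k) (by norm_num)
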